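/- (Menas) If κ is a measurable cardinal and the set of strongly compact cardinals below κ is unbounded in κ, then κ is strongly compact. -/

import Mathlib

/-!
Fix a `κ`-complete nonprincipal ultrafilter `D` on `κ` and a cardinal `λ ≥ κ`. A measurable
cardinal is closed under successors (`succ_lt_of_measure`), so for every `ξ < κ` there is a strongly
compact `μ ξ < κ` with `|ξ| < μ ξ`, and with it a `μ ξ`-complete fine ultrafilter `V ξ` on
`P_{μ ξ}(λ) ⊆ P_κ(λ)`. The `D`-limit of the `V ξ`, in which `Y ⊆ P_κ(λ)` is large when
`Y ∩ P_{μ ξ}(λ) ∈ V ξ` for `D`-almost all `ξ`, is a fine ultrafilter on `P_κ(λ)`. It is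
`κ`-complete: given `γ < κ` large sets, `D`-almost all `ξ` are at least `γ` (`tail_mem`), and for
those `ξ` the ultrafilter `V ξ` is closed under intersections of `γ` sets because `γ ≤ |ξ| < μ ξ`.
-/

open Cardinal Set

/-- `P_κ(λ)`: the collection of all sets of ordinals below `λ` of cardinality less than `κ`. -/
def smallSubsets (κ lam : Cardinal.{0}) : Set (Set Ordinal.{0}) :=
  {s | (∀ α ∈ s, α < lam.ord) ∧ #s < Cardinal.lift.{1} κ}

/-- `U` is an ultrafilter on the set `A`. -/
structure IsUltrafilterOn {α : Type*} (A : Set α) (U : Set (Set α)) : Prop where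
  sets_subset : ∀ Y ∈ U, Y ⊆ A
  base_mem : A ∈ U
  empty_not_mem : ∅ ∉ U
  superset_mem : ∀ Y ∈ U, ∀ Z ⊆ A, Y ⊆ Z → Z ∈ U
  inter_mem : ∀ Y ∈ U, ∀ Z ∈ U, Y ∩ Z ∈ U
  mem_or_compl_mem : ∀ Y ⊆ A, Y ∈ U ∨ A \ Y ∈ U

/-- `U` is `κ`-complete: the intersection of fewer than `κ` members of `U` is in `U`. -/
def IsKappaComplete {α : Type 1} (κ : Cardinal.{0}) (A : Set α) (U : Set (Set α)) : Prop :=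
  ∀ F : Set (Set α), F ⊆ U → #F < Cardinal.lift.{1} κ → A ∩ ⋂₀ F ∈ U

/-- `U` is a fine (ultra)filter on `P_κ(λ)`. -/
def IsFine (κ lam : Cardinal.{0}) (U : Set (Set (Set Ordinal.{0}))) : Prop :=
  ∀ α < lam.ord, {s ∈ smallSubsets κ lam | α ∈ s} ∈ U

/-- `κ` is `λ`-strongly compact: there is a `κ`-complete fine ultrafilter on `P_κ(λ)`. -/
def IsStronglyCompactIn (κ lam : Cardinal.{0}) : Prop :=
  ∃ U : Set (Set (Set Ordinal.{0})), IsUltrafilterOn (smallSubsets κ lam) U ∧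
    IsKappaComplete κ (smallSubsets κ lam) U ∧ IsFine κ lam U

/-- `κ` is strongly compact: `λ`-strongly compact for every cardinal `λ ≥ κ`. -/
def IsStronglyCompactCard (κ : Cardinal.{0}) : Prop :=
  ∀ lam, κ ≤ lam → IsStronglyCompactIn κ lam

/-- `κ` is measurable: uncountable, with a `κ`-complete nonprincipal ultrafilter on `κ`
(identified with the set of ordinals below `κ`). -/
def IsMeasurableCard (κ : Cardinal.{0}) : Prop :=
  ℵ₀ < κ ∧ ∃ U : Set (Set Ordinal.{0}), IsUltrafilterOn (Set.Iio κ.ord) U ∧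
    IsKappaComplete κ (Set.Iio κ.ord) U ∧ ∀ γ : Ordinal.{0}, {γ} ∉ U

theorem IsKappaComplete.iInter_mem {α : Type 1} {κ : Cardinal.{0}} {A : Set α} {U : Set (Set α)}
    (hU : IsKappaComplete κ A U) {ι : Type 1} (hι : #ι < Cardinal.lift.{1} κ) (Y : ι → Set α)
    (hY : ∀ i, Y i ∈ U) : A ∩ ⋂ i, Y i ∈ U := by
  have h := hU (Set.range Y) (by rintro _ ⟨i, rfl⟩; exact hY i) (mk_range_le.trans_lt hι)
  rwa [Set.sInter_range] at h

/-- The successor of any `ν < κ` is below `κ`, since `2 ^ ν < κ`: if `κ` injected into the power set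
of `ν`, deciding each of the `ν` coordinates by the measure would isolate a single point. -/
theorem succ_lt_of_measure {κ : Cardinal.{0}} {U : Set (Set Ordinal.{0})}
    (hU : IsUltrafilterOn (Set.Iio κ.ord) U) (hc : IsKappaComplete κ (Set.Iio κ.ord) U)
    (hn : ∀ γ : Ordinal.{0}, {γ} ∉ U) {ν : Cardinal.{0}} (hν : ν < κ) : Order.succ ν < κ := by
  refine (Order.succ_le_of_lt (cantor ν)).trans_lt ?_
  by_contra hle
  rw [not_lt] at hle
  have hcard : #(Set.Iio κ.ord) ≤ #(Set (Set.Iio ν.ord)) := by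
    rw [mk_set, mk_Iio_ordinal, mk_Iio_ordinal, card_ord, card_ord]
    simpa using Cardinal.lift_le.{1}.2 hle
  obtain ⟨f⟩ := hcard
  classical
  let S : Set.Iio ν.ord → Set Ordinal := fun i => {x | ∃ h : x ∈ Set.Iio κ.ord, i ∈ f ⟨x, h⟩}
  have hS : ∀ i, S i ⊆ Set.Iio κ.ord := fun i x hx => hx.1
  have hI := hc.iInter_mem (ι := Set.Iio ν.ord)
    (by rw [mk_Iio_ordinal, card_ord]; exact Cardinal.lift_lt.2 hν)
    (fun i => if S i ∈ U then S i else Set.Iio κ.ord \ S i) (by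
      intro i
      split_ifs with h
      · exact h
      · exact (hU.mem_or_compl_mem _ (hS i)).resolve_left h)
  have hmem : ∀ x (hx : x ∈ Set.Iio κ.ord),
      x ∈ (⋂ i, if S i ∈ U then S i else Set.Iio κ.ord \ S i) →
      f ⟨x, hx⟩ = {i | S i ∈ U} := by
    intro x hx h
    ext i
    have hi := Set.mem_iInter.1 h i
    by_cases hSi : S i ∈ U
    · rw [if_pos hSi] at hi
      exact ⟨fun _ => hSi, fun _ => hi.2⟩
    · rw [if_neg hSi] at hi
      exact ⟨fun h' => absurd ⟨hx, h'⟩ hi.2, fun h' => absurd h' hSi⟩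
  obtain ⟨x, hx, hx'⟩ : (Set.Iio κ.ord ∩
      ⋂ i, if S i ∈ U then S i else Set.Iio κ.ord \ S i).Nonempty := by
    rw [Set.nonempty_iff_ne_empty]
    intro h
    exact hU.empty_not_mem (h ▸ hI)
  refine hn x (hU.superset_mem _ hI _ (by simpa using hx) ?_)
  rintro y ⟨hy, hy'⟩
  have := f.injective ((hmem y hy hy').trans (hmem x hx hx').symm)
  exact congrArg Subtype.val this

/-- Final segments of `κ` have measure one: an initial segment is a union of fewer than `κ`
singletons, none of which is in the measure. -/
theorem tail_mem {κ : Cardinal.{0}} {U : Set (Set Ordinal.{0})}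
    (hU : IsUltrafilterOn (Set.Iio κ.ord) U) (hc : IsKappaComplete κ (Set.Iio κ.ord) U)
    (hn : ∀ γ : Ordinal.{0}, {γ} ∉ U) {ν : Cardinal.{0}} (hν : ν < κ) :
    {ξ ∈ Set.Iio κ.ord | ν.ord ≤ ξ} ∈ U := by
  have hI := hc.iInter_mem (ι := Set.Iio ν.ord)
    (by rw [mk_Iio_ordinal, card_ord]; exact Cardinal.lift_lt.2 hν)
    (fun i => Set.Iio κ.ord \ {i.1}) (fun i =>
      (hU.mem_or_compl_mem {i.1} (by
        simpa using lt_trans (show i.1 < ν.ord from i.2) (ord_lt_ord.2 hν))).resolve_left (hn _))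
  refine hU.superset_mem _ hI _ (fun x hx => hx.1) ?_
  rintro x ⟨hx, hx'⟩
  refine ⟨hx, not_lt.1 fun hlt => ?_⟩
  exact (Set.mem_iInter.1 hx' ⟨x, hlt⟩).2 rfl

theorem smallSubsets_mono {μ κ lam : Cardinal.{0}} (h : μ ≤ κ) :
    smallSubsets μ lam ⊆ smallSubsets κ lam :=
  fun _ hs => ⟨hs.1, hs.2.trans_le (Cardinal.lift_le.2 h)⟩

/-- **Menas.** If `κ` is a measurable cardinal and the set of strongly compact cardinals
below `κ` is unbounded in `κ`, then `κ` is strongly compact. -/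
theorem menas_measurable_limit_stronglyCompact (κ : Cardinal.{0})
    (hmeas : IsMeasurableCard κ)
    (hub : ∀ β < κ, ∃ μ : Cardinal.{0}, β ≤ μ ∧ μ < κ ∧ IsStronglyCompactCard μ) :
    IsStronglyCompactCard κ := by
  obtain ⟨-, D, hD, hDc, hDn⟩ := hmeas
  intro lam hlam
  have key : ∀ ξ : Ordinal.{0}, ∃ (μ : Cardinal.{0}) (V : Set (Set (Set Ordinal.{0}))),
      ξ < κ.ord → (ξ.card < μ ∧ μ < κ ∧ IsUltrafilterOn (smallSubsets μ lam) V ∧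
        IsKappaComplete μ (smallSubsets μ lam) V ∧ IsFine μ lam V) := by
    intro ξ
    by_cases hξ : ξ < κ.ord
    · obtain ⟨μ, h1, h2, h3⟩ := hub _ (succ_lt_of_measure hD hDc hDn (lt_ord.1 hξ))
      obtain ⟨V, hV⟩ := h3 lam (h2.le.trans hlam)
      exact ⟨μ, V, fun _ => ⟨Order.succ_le_iff.1 h1, h2, hV⟩⟩
    · exact ⟨0, ∅, fun h => absurd h hξ⟩
  choose μ V hV using key
  have hsub : ∀ ξ < κ.ord, smallSubsets (μ ξ) lam ⊆ smallSubsets κ lam :=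
    fun ξ hξ => smallSubsets_mono (hV ξ hξ).2.1.le
  let T : Set (Set Ordinal.{0}) → Set Ordinal.{0} :=
    fun Y => {ξ ∈ Set.Iio κ.ord | Y ∩ smallSubsets (μ ξ) lam ∈ V ξ}
  have hT : ∀ Y, T Y ⊆ Set.Iio κ.ord := fun Y ξ h => h.1
  have hTall : ∀ Y, (∀ ξ < κ.ord, Y ∩ smallSubsets (μ ξ) lam ∈ V ξ) → T Y ∈ D := fun Y h =>
    hD.superset_mem _ hD.base_mem _ (hT Y) fun ξ hξ => ⟨hξ, h ξ hξ⟩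
  refine ⟨{Y | Y ⊆ smallSubsets κ lam ∧ T Y ∈ D}, ⟨fun Y hY => hY.1, ⟨subset_rfl, ?_⟩, ?_, ?_, ?_,
    ?_⟩, ?_, ?_⟩
  · refine hTall _ fun ξ hξ => ?_
    rw [Set.inter_eq_right.2 (hsub ξ hξ)]
    exact (hV ξ hξ).2.2.1.base_mem
  · rintro ⟨-, h⟩
    have : T ∅ = ∅ := by
      ext ξ
      refine ⟨fun hξ => ?_, fun h => absurd h (Set.notMem_empty _)⟩
      have h2 := hξ.2
      rw [Set.empty_inter] at h2
      exact absurd h2 (hV ξ hξ.1).2.2.1.empty_not_mem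
    exact hD.empty_not_mem (this ▸ h)
  · rintro Y ⟨-, hY⟩ Z hZ hYZ
    refine ⟨hZ, hD.superset_mem _ hY _ (hT Z) fun ξ hξ => ⟨hξ.1, ?_⟩⟩
    exact (hV ξ hξ.1).2.2.1.superset_mem _ hξ.2 _ Set.inter_subset_right
      (Set.inter_subset_inter_left _ hYZ)
  · rintro Y ⟨hY, hYD⟩ Z ⟨hZ, hZD⟩
    refine ⟨Set.inter_subset_left.trans hY,
      hD.superset_mem _ (hD.inter_mem _ hYD _ hZD) _ (hT _) fun ξ hξ => ⟨hξ.1.1, ?_⟩⟩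
    rw [Set.inter_inter_distrib_right]
    exact (hV ξ hξ.1.1).2.2.1.inter_mem _ hξ.1.2 _ hξ.2.2
  · intro Y hY
    refine (hD.mem_or_compl_mem _ (hT Y)).imp (fun h => ⟨hY, h⟩) fun h => ⟨Set.sdiff_subset, ?_⟩
    refine hD.superset_mem _ h _ (hT _) fun ξ hξ => ⟨hξ.1, ?_⟩
    have h1 := ((hV ξ hξ.1).2.2.1.mem_or_compl_mem (Y ∩ smallSubsets (μ ξ) lam)
      Set.inter_subset_right).resolve_left fun h' => hξ.2 ⟨hξ.1, h'⟩
    refine (hV ξ hξ.1).2.2.1.superset_mem _ h1 _ Set.inter_subset_right ?_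
    exact fun s hs => ⟨⟨hsub ξ hξ.1 hs.1, fun h' => hs.2 ⟨h', hs.1⟩⟩, hs.1⟩
  · intro F hF hcard
    refine ⟨Set.inter_subset_left, ?_⟩
    obtain ⟨γ, hγκ, hγ⟩ := Cardinal.lt_lift_iff.1 hcard
    have h1 := hDc.iInter_mem hcard (fun Y : F => T Y) fun Y => (hF Y.2).2
    have h2 := hD.inter_mem _ h1 _ (tail_mem hD hDc hDn hγκ)
    refine hD.superset_mem _ h2 _ (hT _) ?_
    rintro ξ ⟨⟨hξ, hξF⟩, -, hγξ⟩
    refine ⟨hξ, ?_⟩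
    obtain ⟨hξμ, -, hu, hcomp, -⟩ := hV ξ hξ
    have hFμ : #F < Cardinal.lift.{1} (μ ξ) := by
      rw [← hγ]
      exact Cardinal.lift_lt.2 ((ord_le.1 hγξ).trans_lt hξμ)
    have h3 := hcomp.iInter_mem hFμ (fun Y : F => Y.1 ∩ smallSubsets (μ ξ) lam)
      fun Y => (Set.mem_iInter.1 hξF Y).2
    refine hu.superset_mem _ h3 _ Set.inter_subset_right ?_
    rintro s ⟨hs, hs'⟩
    exact ⟨⟨hsub ξ hξ hs, fun Y hY => (Set.mem_iInter.1 hs' ⟨Y, hY⟩).1⟩, hs⟩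
  · intro α hα
    refine ⟨fun s hs => hs.1, hTall _ fun ξ hξ => ?_⟩
    refine (hV ξ hξ).2.2.1.superset_mem _ ((hV ξ hξ).2.2.2.2 α hα) _ Set.inter_subset_right ?_
    exact fun s hs => ⟨⟨hsub ξ hξ hs.1, hs.2⟩, hs.1⟩
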